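/- Let Ω ⊆ ℝ be a bounded measurable set of Lebesgue measure 1, let Λ be a spectrum of Ω, and suppose T > 0 satisfies Λ + T = Λ. Then T is a positive integer. -/

import Mathlib

open MeasureTheory Set

/-- The exponential function `e_λ(x) = exp(2πiλx)`. -/
noncomputable def expF (lam : ℝ) : ℝ → ℂ :=
  fun x => Complex.exp (2 * (Real.pi : ℂ) * Complex.I * (lam : ℂ) * (x : ℂ))

/-- `Λ` is a spectrum of `Ω`. -/
def IsSpectrum (Ω Λ : Set ℝ) : Prop :=
  ∃ F : Λ → Lp ℂ 2 (volume.restrict Ω),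
    (∀ l : Λ, ⇑(F l) =ᵐ[volume.restrict Ω] expF (l : ℝ)) ∧
    Orthonormal ℂ F ∧
    (Submodule.span ℂ (Set.range F)).topologicalClosure = ⊤

/-!
For a spectrum `Λ` of `Ω`, Parseval's identity in `L²(Ω)` applied to `e_t` says that the translates
by `Λ` of the power spectrum `|𝓕 1_Ω|²` sum to the constant `|Ω|`. Integrating this over a period of
`Λ` and unfolding gives `T |Ω| = #(Λ ∩ (0, T]) ∫ |𝓕 1_Ω|²`, where the last integral is again `|Ω|`
by Plancherel's theorem. Hence `T` is the number of points of `Λ` in a period.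
-/

open scoped FourierTransform ENNReal InnerProductSpace Pointwise SchwartzMap

lemma lintegral_enorm_sq_eq_eLpNorm_two_sq {α ε : Type*} [MeasurableSpace α] [ENorm ε] (f : α → ε)
    (μ : Measure α) : ∫⁻ x, ‖f x‖ₑ ^ 2 ∂μ = eLpNorm f 2 μ ^ 2 := by
  simpa using! (eLpNorm_nnreal_pow_eq_lintegral (f := f) (μ := μ) two_ne_zero).symm

section Fourier

variable {E F : Type*} [NormedAddCommGroup E] [InnerProductSpace ℝ E] [FiniteDimensional ℝ E]
  [MeasurableSpace E] [BorelSpace E] [NormedAddCommGroup F] [NormedSpace ℂ F] {f : E → F}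

lemma continuous_fourier_of_integrable (hf : Integrable f) : Continuous (𝓕 f) :=
  VectorFourier.fourierIntegral_continuous Real.continuous_fourierChar
    (L := innerₗ E) continuous_inner hf

lemma integral_fourier_smul_eq [CompleteSpace F] {g : E → ℂ} (hg : Integrable g)
    (hf : Integrable f) : ∫ x, 𝓕 g x • f x = ∫ x, g x • 𝓕 f x := by
  simpa using! VectorFourier.integral_fourierIntegral_smul_eq_flip (L := innerₗ E)
    Real.continuous_fourierChar continuous_inner hg hf

end Fourier

section Plancherel

variable {E F : Type*} [NormedAddCommGroup E] [InnerProductSpace ℝ E] [FiniteDimensional ℝ E]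
  [MeasurableSpace E] [BorelSpace E]
  [NormedAddCommGroup F] [InnerProductSpace ℂ F] [CompleteSpace F] {f : E → F}

-- Both transforms define the same tempered distribution, as `𝓕` is self-adjoint on `L¹`.
lemma fourier_toLp_ae_eq (hf : Integrable f) (hf2 : MemLp f 2) :
    (𝓕 (hf2.toLp f) : E →₂[volume] F) =ᵐ[volume] 𝓕 f := by
  refine ae_eq_of_integral_contDiff_smul_eq ((Lp.memLp _).locallyIntegrable one_le_two)
    (continuous_fourier_of_integrable hf).locallyIntegrable fun g hg hgc ↦ ?_
  have hgc' : HasCompactSupport (Complex.ofRealCLM ∘ g) := hgc.comp_left rfl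
  let φ : 𝓢(E, ℂ) := hgc'.toSchwartzMap (by fun_prop)
  calc ∫ x, g x • (𝓕 (hf2.toLp f) : E →₂[volume] F) x
      = ((𝓕 (hf2.toLp f) : E →₂[volume] F) : 𝓢'(E, F)) φ := by simp [φ]
    _ = (hf2.toLp f : 𝓢'(E, F)) (𝓕 φ) := by
        rw [← Lp.fourier_toTemperedDistribution_eq, TemperedDistribution.fourier_apply]
    _ = ∫ x, 𝓕 (φ : E → ℂ) x • f x := by
        rw [Lp.toTemperedDistribution_apply]
        refine integral_congr_ae ?_
        filter_upwards [hf2.coeFn_toLp] with x hx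
        rw [hx, SchwartzMap.fourier_coe]
    _ = ∫ x, φ x • 𝓕 f x := integral_fourier_smul_eq φ.integrable hf
    _ = ∫ x, g x • 𝓕 f x := by simp [φ]

lemma eLpNorm_fourier_two_eq (hf : Integrable f) (hf2 : MemLp f 2) :
    eLpNorm (𝓕 f) 2 = eLpNorm f 2 := by
  rw [← eLpNorm_congr_ae (fourier_toLp_ae_eq hf hf2), ← Lp.enorm_def, ← Lp.enorm_toLp hf2,
    ← ofReal_norm, Lp.norm_fourier_eq, ofReal_norm]

/-- The power spectrum `|𝓕 1_s|²` of a set `s`, with values in `ℝ≥0∞` so that its sums and integrals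
need no convergence side conditions. -/
noncomputable def powerSpectrum (s : Set E) (ξ : E) : ℝ≥0∞ :=
  ‖𝓕 (s.indicator (1 : E → ℂ)) ξ‖ₑ ^ 2

lemma measurable_powerSpectrum {s : Set E} (hs : MeasurableSet s) (hs' : volume s ≠ ∞) :
    Measurable (powerSpectrum s) :=
  have hint : Integrable (s.indicator (1 : E → ℂ)) :=
    memLp_one_iff_integrable.1 (memLp_indicator_const 1 hs 1 (.inr hs'))
  (continuous_fourier_of_integrable hint).enorm.measurable.pow_const 2

lemma lintegral_powerSpectrum {s : Set E} (hs : MeasurableSet s) (hs' : volume s ≠ ∞) :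
    ∫⁻ ξ, powerSpectrum s ξ = volume s := by
  have hmem (p : ℝ≥0∞) : MemLp (s.indicator (1 : E → ℂ)) p :=
    memLp_indicator_const p hs 1 (.inr hs')
  unfold powerSpectrum
  rw [lintegral_enorm_sq_eq_eLpNorm_two_sq,
    eLpNorm_fourier_two_eq (memLp_one_iff_integrable.1 (hmem 1)) (hmem 2),
    ← lintegral_enorm_sq_eq_eLpNorm_two_sq, ← lintegral_indicator_one hs]
  refine lintegral_congr fun x ↦ ?_
  by_cases hx : x ∈ s <;> simp [hx]

end Plancherel

section Periodic

variable {Λ : Set ℝ} {T : ℝ}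

lemma encard_inter_Ioc_add_eq (hT : 0 < T) (hΛ : Λ.Countable) (hper : T +ᵥ Λ = Λ) (a b : ℝ) :
    (Λ ∩ Ioc a (a + T)).encard = (Λ ∩ Ioc b (b + T)).encard := by
  have hstab : AddSubgroup.zmultiples T ≤ AddAction.stabilizer ℝ Λ :=
    AddSubgroup.zmultiples_le_of_mem hper
  have hinv (g : AddSubgroup.zmultiples T) : (g +ᵥ ·) ⁻¹' Λ = Λ :=
    (preimage_vadd g Λ).trans (hstab (-g).2)
  have := (isAddFundamentalDomain_Ioc hT a .count).measure_set_eq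
    (isAddFundamentalDomain_Ioc hT b .count) hΛ.measurableSet hinv
  rw [Measure.count_apply (hΛ.measurableSet.inter measurableSet_Ioc),
    Measure.count_apply (hΛ.measurableSet.inter measurableSet_Ioc)] at this
  exact_mod_cast this

lemma setLIntegral_Ioc_comp_sub_left (g : ℝ → ℝ≥0∞) (T l : ℝ) :
    ∫⁻ t in Ioc 0 T, g (l - t) = ∫⁻ s in Ico (l - T) l, g s := by
  simpa using (Measure.measurePreserving_sub_left volume l).setLIntegral_comp_emb
    (MeasurableEquiv.subLeft l).measurableEmbedding g (Ioc 0 T)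

lemma tsum_indicator_Ico_sub (Λ : Set ℝ) (T : ℝ) (g : ℝ → ℝ≥0∞) (s : ℝ) :
    ∑' l : Λ, (Ico (l - T) (l : ℝ)).indicator g s = (Λ ∩ Ioc s (s + T)).encard * g s := by
  rw [← ENNReal.tsum_set_one, ← ENNReal.tsum_mul_right,
    tsum_subtype (Λ ∩ Ioc s (s + T)) fun _ ↦ 1 * g s,
    tsum_subtype Λ fun l ↦ (Ico (l - T) l).indicator g s]
  refine tsum_congr fun l ↦ ?_
  have hmem : s ∈ Ico (l - T) l ↔ l ∈ Ioc s (s + T) := by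
    rw [mem_Ico, mem_Ioc, and_comm, sub_le_iff_le_add]
  by_cases hl : l ∈ Λ <;> simp [indicator, hl, hmem]

lemma setLIntegral_tsum_sub_eq_encard_mul (hT : 0 < T) (hΛ : Λ.Countable) (hper : T +ᵥ Λ = Λ)
    {g : ℝ → ℝ≥0∞} (hg : Measurable g) :
    ∫⁻ t in Ioc 0 T, ∑' l : Λ, g (l - t) = (Λ ∩ Ioc 0 T).encard * ∫⁻ s, g s := by
  have := hΛ.to_subtype
  calc ∫⁻ t in Ioc 0 T, ∑' l : Λ, g (l - t)
      = ∑' l : Λ, ∫⁻ t in Ioc 0 T, g (l - t) := lintegral_tsum fun l ↦ by fun_prop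
    _ = ∑' l : Λ, ∫⁻ s, (Ico (l - T) (l : ℝ)).indicator g s := by
        simp_rw [setLIntegral_Ioc_comp_sub_left, lintegral_indicator measurableSet_Ico]
    _ = ∫⁻ s, ∑' l : Λ, (Ico (l - T) (l : ℝ)).indicator g s :=
        (lintegral_tsum fun _ ↦ (hg.indicator measurableSet_Ico).aemeasurable).symm
    _ = ∫⁻ s, (Λ ∩ Ioc s (s + T)).encard * g s := by simp_rw [tsum_indicator_Ico_sub]
    _ = ∫⁻ s, (Λ ∩ Ioc 0 T).encard * g s := by
        simp_rw [encard_inter_Ioc_add_eq hT hΛ hper _ 0, zero_add]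
    _ = (Λ ∩ Ioc 0 T).encard * ∫⁻ s, g s := lintegral_const_mul _ hg

end Periodic

section Orthonormal

variable {ι 𝕜 H : Type*} [RCLike 𝕜] [NormedAddCommGroup H] [InnerProductSpace 𝕜 H]

lemma dist_eq_sqrt_two_of_orthonormal {v : ι → H} (hv : Orthonormal 𝕜 v) {i j : ι} (hij : i ≠ j) :
    dist (v i) (v j) = √2 := by
  rw [dist_eq_norm, ← Real.sqrt_sq (norm_nonneg _), @norm_sub_sq 𝕜, hv.1, hv.1, hv.2 hij]
  norm_num

lemma countable_of_orthonormal [TopologicalSpace.SeparableSpace H] {v : ι → H}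
    (hv : Orthonormal 𝕜 v) : Countable ι := by
  refine Pairwise.countable_of_isOpen_disjoint (s := fun i ↦ Metric.ball (v i) (√2 / 2))
    (fun i j hij ↦ Metric.ball_disjoint_ball ?_) (fun _ ↦ Metric.isOpen_ball)
    fun i ↦ Metric.nonempty_ball.2 (by positivity)
  rw [dist_eq_sqrt_two_of_orthonormal hv hij, add_halves]

lemma tsum_enorm_inner_sq (b : HilbertBasis ι 𝕜 H) (x : H) :
    ∑' i, ‖⟪b i, x⟫_𝕜‖ₑ ^ 2 = ‖x‖ₑ ^ 2 := by
  have h : HasSum (fun i ↦ ‖⟪b i, x⟫_𝕜‖ ^ 2) (‖x‖ ^ 2) := by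
    simpa [b.repr_apply_apply] using lp.hasSum_norm (p := 2) (by norm_num) (b.repr x)
  simp_rw [← ofReal_norm, ← ENNReal.ofReal_pow (norm_nonneg _)]
  rw [← h.tsum_eq, ENNReal.ofReal_tsum_of_nonneg (fun _ ↦ by positivity) h.summable]

end Orthonormal

section Exponential

lemma expF_eq_fourierChar (s x : ℝ) : expF s x = Real.fourierChar (s * x) := by
  rw [Real.fourierChar_apply, expF]
  congr 1
  push_cast
  ring

lemma norm_expF (s x : ℝ) : ‖expF s x‖ = 1 := by
  rw [expF_eq_fourierChar, Circle.norm_coe]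

lemma continuous_expF (s : ℝ) : Continuous (expF s) := by
  unfold expF
  fun_prop

lemma memLp_expF (s : ℝ) (p : ℝ≥0∞) (μ : Measure ℝ) [IsFiniteMeasure μ] : MemLp (expF s) p μ :=
  .of_bound (continuous_expF s).aestronglyMeasurable 1 (by simp [norm_expF])

lemma inner_expF_expF (s t x : ℝ) :
    ⟪expF s x, expF t x⟫_ℂ = Real.fourierChar (-(x * (s - t))) := by
  rw [RCLike.inner_apply, expF_eq_fourierChar, expF_eq_fourierChar, ← Circle.coe_inv_eq_conj,
    ← AddChar.map_neg_eq_inv, ← Circle.coe_mul, ← AddChar.map_add_eq_mul]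
  congr 2
  ring

lemma setIntegral_inner_expF_expF {Ω : Set ℝ} (hΩ : MeasurableSet Ω) (s t : ℝ) :
    ∫ x in Ω, ⟪expF s x, expF t x⟫_ℂ = 𝓕 (Ω.indicator (1 : ℝ → ℂ)) (s - t) := by
  rw [Real.fourier_real_eq, ← integral_indicator hΩ]
  congr with x
  by_cases hx : x ∈ Ω <;> simp [hx, inner_expF_expF, Circle.smul_def, -RCLike.inner_apply]

lemma enorm_toLp_expF_sq (t : ℝ) (μ : Measure ℝ) [IsFiniteMeasure μ] :
    ‖(memLp_expF t 2 μ).toLp‖ₑ ^ 2 = μ univ := by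
  rw [Lp.enorm_toLp, ← lintegral_enorm_sq_eq_eLpNorm_two_sq]
  simp [← ofReal_norm, norm_expF]

end Exponential

namespace IsSpectrum

variable {Ω Λ : Set ℝ}

lemma countable (hΛ : IsSpectrum Ω Λ) : Λ.Countable := by
  obtain ⟨F, -, hF, -⟩ := hΛ
  have : Fact ((2 : ℝ≥0∞) ≠ ∞) := ⟨ENNReal.ofNat_ne_top⟩
  exact countable_of_orthonormal hF

lemma tsum_powerSpectrum_sub (hΛ : IsSpectrum Ω Λ) (hΩ : MeasurableSet Ω) (hΩ' : volume Ω ≠ ∞)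
    (t : ℝ) : ∑' l : Λ, powerSpectrum Ω (l - t) = volume Ω := by
  obtain ⟨F, hF_eq, hF_orth, hF_total⟩ := hΛ
  have : IsFiniteMeasure (volume.restrict Ω) := ⟨by simpa using hΩ'.lt_top⟩
  let b := HilbertBasis.mk hF_orth hF_total.ge
  have ht := memLp_expF t 2 (volume.restrict Ω)
  have hinner (l : Λ) : ⟪b l, ht.toLp⟫_ℂ = 𝓕 (Ω.indicator (1 : ℝ → ℂ)) (l - t) := by
    rw [← setIntegral_inner_expF_expF hΩ, HilbertBasis.coe_mk, L2.inner_def]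
    refine integral_congr_ae ?_
    filter_upwards [hF_eq l, ht.coeFn_toLp] with x hFx htx
    rw [hFx, htx]
  calc ∑' l : Λ, powerSpectrum Ω (l - t)
      = ∑' l : Λ, ‖⟪b l, ht.toLp⟫_ℂ‖ₑ ^ 2 := by simp_rw [hinner, powerSpectrum]
    _ = ‖ht.toLp‖ₑ ^ 2 := tsum_enorm_inner_sq b _
    _ = volume Ω := by rw [enorm_toLp_expF_sq, Measure.restrict_apply_univ]

lemma ofReal_period_eq_encard (hΛ : IsSpectrum Ω Λ) (hΩ : MeasurableSet Ω) (hvol : volume Ω = 1)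
    {T : ℝ} (hT : 0 < T) (hper : T +ᵥ Λ = Λ) :
    ENNReal.ofReal T = (Λ ∩ Ioc 0 T).encard := by
  have hΩ' : volume Ω ≠ ∞ := by simp [hvol]
  calc ENNReal.ofReal T
      = ∫⁻ t in Ioc 0 T, ∑' l : Λ, powerSpectrum Ω (l - t) := by
        simp [hΛ.tsum_powerSpectrum_sub hΩ hΩ', hvol]
    _ = (Λ ∩ Ioc 0 T).encard * ∫⁻ ξ, powerSpectrum Ω ξ :=
        setLIntegral_tsum_sub_eq_encard_mul hT hΛ.countable hper (measurable_powerSpectrum hΩ hΩ')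
    _ = (Λ ∩ Ioc 0 T).encard := by rw [lintegral_powerSpectrum hΩ hΩ', hvol, mul_one]

end IsSpectrum

theorem period_of_spectrum_is_integer_general (Ω : Set ℝ) (hmeas : MeasurableSet Ω)
    (hvol : volume Ω = 1) (Λ : Set ℝ) (hΛ : IsSpectrum Ω Λ)
    (T : ℝ) (hT : 0 < T) (hper : (fun l => l + T) '' Λ = Λ) :
    ∃ k : ℕ, 0 < k ∧ T = (k : ℝ) := by
  have hper' : T +ᵥ Λ = Λ := by
    simpa only [← image_vadd, vadd_eq_add, add_comm T] using hper
  have hcard := hΛ.ofReal_period_eq_encard hmeas hvol hT hper'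
  have hfin : (Λ ∩ Ioc 0 T).encard ≠ ⊤ := fun h ↦ by simp [h] at hcard
  obtain ⟨k, hk⟩ := ENat.ne_top_iff_exists.1 hfin
  have hTk : T = k := by
    simpa [← hk, hT.le] using congrArg ENNReal.toReal hcard
  exact ⟨k, Nat.cast_pos.1 (hTk ▸ hT), hTk⟩

/-- Any period of a spectrum of a set of measure 1 must be a positive integer. -/
theorem period_of_spectrum_is_integer (Ω : Set ℝ)
    (hbd : Bornology.IsBounded Ω) (hmeas : MeasurableSet Ω)
    (hvol : volume Ω = 1) (Λ : Set ℝ) (hΛ : IsSpectrum Ω Λ)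
    (T : ℝ) (hT : 0 < T) (hper : (fun l => l + T) '' Λ = Λ) :
    ∃ k : ℕ, 0 < k ∧ T = (k : ℝ) :=
  period_of_spectrum_is_integer_general Ω hmeas hvol Λ hΛ T hT hper
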